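/- Let k ≥ 1 and suppose f ∈ ℬ_i for some 1 ≤ i ≤ k+1. Then: (1) μ_k(∂f) = μ_k(f) − 1 if either ∂f ∈ ℬ_j for some j with i < j, or ∂f ∈ ℬ_i with i ≠ k+1; otherwise μ_k(∂f) = μ_k(f); (2) |∂f| = |f| − k·μ_k(f) if i = k+1, and |∂f| = |f| − k·μ_k(f) + (k−i) if i ≤ k. -/

import Mathlib

/-!
Write `R = I^R_k(f)` and `f' = ∂f`. The greedy set is a `k`-separated subset of the support of `f`
such that every `s` in the support satisfies `s ≤ a < s + k` for some `a ∈ R`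
(`exists_greedy`). Two `k`-separated indices cannot lie in the same window `(a - k, a]`, so
`μ_k(f) = |R|` (`kmeasureF_eq_card`).

Every `p` in the support of `f'` satisfies `p < a ≤ p + k` for some `a ∈ R`, and `a - k` is in the
support of `f'` for every `a ∈ R` with `a > k`. If all elements of `R` exceed `k`, these facts give
`μ_k(f') = |R|`. If `min R = i ≤ k`, they give `|R| - 1 ≤ μ_k(f') ≤ |R|`, and with
`R' = I^R_k(f')` the value `|R|` is attained exactly when `R'` has an element below `i`:

* if `|R'| = |R|`, the injection sending `b ∈ R'` to its window `[a - k, a)` is onto, so the window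
  of `i` contains an element of `R'`;
* if some `b ∈ R'` is below `i`, then each `a ∈ R \ {i}` gives an element of `R'` in `[a - k, a)`,
  which is at least `i` because `a ≥ i + k`; these `|R| - 1` elements differ from `b`.

The absence of elements of `R'` below `i` says that `f'` lies in some `ℬ_j` with `j ≥ i`. The weight
formula follows by summing `p * f' p + p * [p ∈ R] = p * f p + p * [p + k ∈ R]` over `p`.
-/

noncomputable section
open scoped Classical

/-- `ℱ`: frequency lists, i.e. finitely supported functions on the positive
integers (extended by `f 0 = 0`). -/
def Freq : Set (ℕ → ℕ) := {f | f 0 = 0 ∧ (Function.support f).Finite}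

/-- The largest index in the support of `f` (junk value for infinite support). -/
def topBound (f : ℕ → ℕ) : ℕ := sSup {i | f i ≠ 0}

/-- Greedy left-to-right scan with the given fuel: repeatedly select the least
index `i ≥ lb` with `f i ≠ 0` and continue from `i + k`. -/
def ILaux (k : ℕ) (f : ℕ → ℕ) : ℕ → ℕ → Set ℕ
  | 0, _ => ∅
  | fuel + 1, lb =>
    let i := sInf {j | lb ≤ j ∧ f j ≠ 0}
    if i = 0 then ∅ else insert i (ILaux k f fuel (i + k))

/-- `I^L_k(f)`: the greedily chosen left endpoints of forward clusters. -/
def IL (k : ℕ) (f : ℕ → ℕ) : Set ℕ := ILaux k f (topBound f + 1) 1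

/-- Greedy right-to-left scan with the given fuel: repeatedly select the
greatest index `i` with `1 ≤ i ≤ b` and `f i ≠ 0`, continuing from `i - k`. -/
def IRaux (k : ℕ) (f : ℕ → ℕ) : ℕ → ℕ → Set ℕ
  | 0, _ => ∅
  | fuel + 1, b =>
    let i := sSup {j | 1 ≤ j ∧ j ≤ b ∧ f j ≠ 0}
    if i = 0 then ∅ else insert i (IRaux k f fuel (i - k))

/-- `I^R_k(f)`: the greedily chosen right endpoints of backward clusters. -/
def IR (k : ℕ) (f : ℕ → ℕ) : Set ℕ := IRaux k f (topBound f + 1) (topBound f)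

/-- The `k`-measure of a frequency list: the largest cardinality of a set of
positive indices in the support of `f` that pairwise differ by at least `k`. -/
def kmeasureF (k : ℕ) (f : ℕ → ℕ) : ℕ :=
  sSup {m | ∃ I : Finset ℕ, I.card = m ∧ (∀ i ∈ I, 1 ≤ i ∧ f i ≠ 0) ∧
    ∀ i ∈ I, ∀ j ∈ I, i < j → i + k ≤ j}

/-- The size `|f| = Σ i·f(i)` of the partition with frequency list `f`. -/
def wt (f : ℕ → ℕ) : ℕ := ∑ i ∈ Finset.range (topBound f + 1), i * f i


/-- `ℱ^{01}`: finitely supported `{0,1}`-valued functions on the positive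
integers (frequency lists of partitions with distinct parts). -/
def Freq01 : Set (ℕ → ℕ) := {f | f 0 = 0 ∧ (∀ i, f i ≤ 1) ∧ (Function.support f).Finite}

/-- The map `∂` (for the `β`-encoding, with ambient parameter `k`): for every
`i ∈ I^R_k(f)`, decrease the value at `i` by one and, when `i - k ≥ 1`,
increase the value at `i - k` by one. -/
def dmap01 (k : ℕ) (f : ℕ → ℕ) : ℕ → ℕ := fun p =>
  f p - (if p ∈ IR k f then 1 else 0) +
    (if 1 ≤ p ∧ p + k ∈ IR k f then 1 else 0)

/-- The map `β_{k+1}`: for every `i ∈ I^L_k(f)`, decrease the value at `i` by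
one and increase the value at `i + k` by one. -/
def betaTop (k : ℕ) (f : ℕ → ℕ) : ℕ → ℕ := fun p =>
  f p - (if p ∈ IL k f then 1 else 0) +
    (if ∃ i ∈ IL k f, p = i + k then 1 else 0)

/-- The map `β_j` for `1 ≤ j ≤ k + 1` (ambient parameter `k`): for `j = k + 1`
it is `betaTop`; for `j ≤ k` it fixes values at indices `< j` and on indices
`j - 1 + i` (`i ≥ 1`) acts as `β_{k+1}` applied to the shifted tail
`t ↦ f (j - 1 + t)` with the resulting value at `1` increased by one. -/
def betaMap (k j : ℕ) (f : ℕ → ℕ) : ℕ → ℕ :=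
  if j = k + 1 then betaTop k f
  else fun p =>
    if p < j then f p
    else betaTop k (fun t => f (j - 1 + t)) (p - (j - 1)) + (if p = j then 1 else 0)

/-- The class `ℬ_j` (ambient parameter `k`): for `1 ≤ j ≤ k` it consists of the
`f ∈ ℱ^{01}` with `min I^R_k(f) = j`; `ℬ_{k+1}` is the complement in `ℱ^{01}`
of the others. -/
def Bset (k j : ℕ) : Set (ℕ → ℕ) :=
  if j = k + 1 then
    Freq01 \ ⋃ j' ∈ Finset.Icc 1 k, {f ∈ Freq01 | IsLeast (IR k f) j'}
  else {f ∈ Freq01 | IsLeast (IR k f) j}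

/-! ### Greedy sets and the `k`-measure -/

/-- `Greedy k f R` says that the finite set `R` is a `k`-separated subset of the support of `f`
whose windows `(a - k, a]`, `a ∈ R`, cover the support. These properties determine `R`, and they
are all that is used of `I^R_k(f)`. -/
structure Greedy (k : ℕ) (f : ℕ → ℕ) (R : Finset ℕ) : Prop where
  supp : ∀ a ∈ R, 1 ≤ a ∧ f a ≠ 0
  sep : ∀ a ∈ R, ∀ b ∈ R, a < b → a + k ≤ b
  cover : ∀ s, f s ≠ 0 → ∃ a ∈ R, s ≤ a ∧ a < s + k

/-- The scan starting at `b` with more than `b` units of fuel runs to completion, because each step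
lowers the bound by at least `k ≥ 1`. -/
lemma IRaux_spec (k : ℕ) (hk : 1 ≤ k) (f : ℕ → ℕ) : ∀ (fuel b : ℕ), b < fuel →
    (∀ a ∈ IRaux k f fuel b, 1 ≤ a ∧ a ≤ b ∧ f a ≠ 0) ∧
    (∀ a ∈ IRaux k f fuel b, ∀ c ∈ IRaux k f fuel b, a < c → a + k ≤ c) ∧
    (∀ s, 1 ≤ s → s ≤ b → f s ≠ 0 → ∃ a ∈ IRaux k f fuel b, s ≤ a ∧ a < s + k) := by
  intro fuel
  induction fuel with
  | zero => intro b hb; omega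
  | succ n ih =>
    intro b hb
    have hbdd : BddAbove {j | 1 ≤ j ∧ j ≤ b ∧ f j ≠ 0} := ⟨b, fun j hj => hj.2.1⟩
    have hle : ∀ s, 1 ≤ s → s ≤ b → f s ≠ 0 → s ≤ sSup {j | 1 ≤ j ∧ j ≤ b ∧ f j ≠ 0} :=
      fun s h1 h2 h3 => le_csSup hbdd ⟨h1, h2, h3⟩
    have hmem : sSup {j | 1 ≤ j ∧ j ≤ b ∧ f j ≠ 0} ≠ 0 →
        sSup {j | 1 ≤ j ∧ j ≤ b ∧ f j ≠ 0} ∈ {j | 1 ≤ j ∧ j ≤ b ∧ f j ≠ 0} := by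
      intro h
      refine Nat.sSup_mem ?_ hbdd
      by_contra hne
      rw [Set.not_nonempty_iff_eq_empty] at hne
      rw [hne] at h
      simp at h
    simp only [IRaux]
    generalize sSup {j | 1 ≤ j ∧ j ≤ b ∧ f j ≠ 0} = i at hle hmem
    by_cases h0 : i = 0
    · simp only [h0, if_true]
      refine ⟨by simp, by simp, fun s h1 h2 h3 => ?_⟩
      have := hle s h1 h2 h3
      omega
    · obtain ⟨hi1, hib, hfi⟩ := hmem h0
      simp only [h0, if_false]
      obtain ⟨ih1, ih2, ih3⟩ := ih (i - k) (by omega)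
      refine ⟨?_, ?_, ?_⟩
      · rintro a (rfl | ha)
        · exact ⟨hi1, hib, hfi⟩
        · obtain ⟨h1, h2, h3⟩ := ih1 a ha
          exact ⟨h1, by omega, h3⟩
      · rintro a (rfl | ha) c (rfl | hc) hac
        · omega
        · have := ih1 c hc; omega
        · have := ih1 a ha; omega
        · exact ih2 a ha c hc hac
      · intro s h1 h2 h3
        by_cases hs : s ≤ i - k
        · obtain ⟨a, ha, h⟩ := ih3 s h1 hs h3
          exact ⟨a, Or.inr ha, h⟩
        · exact ⟨i, Or.inl rfl, hle s h1 h2 h3, by omega⟩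

lemma le_topBound {f : ℕ → ℕ} (hf : f ∈ Freq01) {p : ℕ} (hp : f p ≠ 0) : p ≤ topBound f :=
  le_csSup hf.2.2.bddAbove hp

lemma exists_greedy (k : ℕ) (hk : 1 ≤ k) (f : ℕ → ℕ) (hf : f ∈ Freq01) :
    ∃ R : Finset ℕ, (∀ a, a ∈ IR k f ↔ a ∈ R) ∧ Greedy k f R := by
  obtain ⟨h1, h2, h3⟩ := IRaux_spec k hk f (topBound f + 1) (topBound f) (by omega)
  have hfin : (IR k f).Finite :=
    (Set.finite_Iic (topBound f)).subset fun a ha => (h1 a ha).2.1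
  change ∀ a ∈ IR k f, _ at h1
  change ∀ a ∈ IR k f, ∀ c ∈ IR k f, _ at h2
  change ∀ s, _ → _ → _ → ∃ a ∈ IR k f, _ at h3
  refine ⟨hfin.toFinset, by simp, ?_, ?_, ?_⟩
  · intro a ha
    have := h1 a (by simpa using ha)
    exact ⟨this.1, this.2.2⟩
  · intro a ha b hb
    exact h2 a (by simpa using ha) b (by simpa using hb)
  · intro s hs
    have hs0 : s ≠ 0 := by rintro rfl; exact hs hf.1
    obtain ⟨a, ha, h⟩ := h3 s (by omega) (le_topBound hf hs) hs
    exact ⟨a, by simpa using ha, h⟩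

/-- Pigeonhole for windows: if `I` is `k`-separated and each `s ∈ I` has `a - k < s + d ≤ a` for
some `a ∈ R`, then distinct elements of `I` use distinct `a`, so `|I| ≤ |R|`. The shift `d`
accommodates both `(a - k, a]` (`d = 0`) and `[a - k, a)` (`d = 1`). In case of equality every
window is used. -/
lemma card_le_of_windows {k d : ℕ} {I R : Finset ℕ}
    (hI : ∀ i ∈ I, ∀ j ∈ I, i < j → i + k ≤ j)
    (hw : ∀ s ∈ I, ∃ a ∈ R, s + d ≤ a ∧ a < s + d + k) :
    I.card ≤ R.card ∧
      (I.card = R.card → ∀ a ∈ R, ∃ s ∈ I, s + d ≤ a ∧ a < s + d + k) := by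
  choose! g hgR hg using hw
  have hinj : Set.InjOn g I := by
    intro x hx y hy hxy
    have hx' := hg x hx
    have hy' := hg y hy
    rw [hxy] at hx'
    rcases lt_trichotomy x y with h | h | h
    · have := hI x hx y hy h; omega
    · exact h
    · have := hI y hy x hx h; omega
  refine ⟨Finset.card_le_card_of_injOn g hgR hinj, fun hc a ha => ?_⟩
  obtain ⟨s, hs, rfl⟩ := Finset.surjOn_of_injOn_of_card_le g hgR hinj hc.ge ha
  exact ⟨s, hs, hg s hs⟩

lemma kmeasureF_eq_card {k : ℕ} {f : ℕ → ℕ} {R : Finset ℕ} (hR : Greedy k f R) :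
    kmeasureF k f = R.card := by
  refine IsGreatest.csSup_eq ⟨⟨R, rfl, hR.supp, hR.sep⟩, ?_⟩
  rintro m ⟨I, rfl, hI1, hI2⟩
  refine (card_le_of_windows (d := 0) hI2 fun s hs => ?_).1
  simpa using hR.cover s (hI1 s hs).2

/-! ### Support and weight of `∂f` -/

/-- If `p + k` is selected by the greedy scan and `p` is in the support, then `p` is the next
selected index. Hence `∂` never increases a value that it does not also decrease. -/
lemma Greedy.mem_of_add_mem {k : ℕ} {f : ℕ → ℕ} {R : Finset ℕ} (hR : Greedy k f R) {p : ℕ}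
    (hp : f p ≠ 0) (hpk : p + k ∈ R) : p ∈ R := by
  obtain ⟨a, ha, h1, h2⟩ := hR.cover p hp
  have := hR.sep a ha _ hpk h2
  obtain rfl : a = p := by omega
  exact ha

lemma dmap01_ne_zero {k : ℕ} {f : ℕ → ℕ} (hf : f ∈ Freq01) {R : Finset ℕ}
    (hmem : ∀ a, a ∈ IR k f ↔ a ∈ R) (p : ℕ) :
    dmap01 k f p ≠ 0 ↔ (f p ≠ 0 ∧ p ∉ R) ∨ (1 ≤ p ∧ p + k ∈ R) := by
  have := hf.2.1 p
  simp only [dmap01, hmem]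
  split_ifs <;> simp_all

lemma dmap01_window {k : ℕ} (hk : 1 ≤ k) {f : ℕ → ℕ} (hf : f ∈ Freq01) {R : Finset ℕ}
    (hmem : ∀ a, a ∈ IR k f ↔ a ∈ R) (hR : Greedy k f R) {p : ℕ} (hp : dmap01 k f p ≠ 0) :
    ∃ a ∈ R, p + 1 ≤ a ∧ a < p + 1 + k := by
  rcases (dmap01_ne_zero hf hmem p).1 hp with ⟨h1, h2⟩ | ⟨h1, h2⟩
  · obtain ⟨a, ha, h3, h4⟩ := hR.cover p h1
    have : a ≠ p := by rintro rfl; exact h2 ha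
    exact ⟨a, ha, by omega, by omega⟩
  · exact ⟨p + k, h2, by omega, by omega⟩

lemma dmap01_support_le {k : ℕ} (hk : 1 ≤ k) {f : ℕ → ℕ} (hf : f ∈ Freq01) {R : Finset ℕ}
    (hmem : ∀ a, a ∈ IR k f ↔ a ∈ R) (hR : Greedy k f R) {p : ℕ} (hp : dmap01 k f p ≠ 0) :
    p < topBound f + 1 := by
  obtain ⟨a, ha, h, -⟩ := dmap01_window hk hf hmem hR hp
  have := le_topBound hf (hR.supp a ha).2
  omega

lemma dmap01_mem {k : ℕ} (hk : 1 ≤ k) {f : ℕ → ℕ} (hf : f ∈ Freq01) {R : Finset ℕ}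
    (hmem : ∀ a, a ∈ IR k f ↔ a ∈ R) (hR : Greedy k f R) : dmap01 k f ∈ Freq01 := by
  refine ⟨?_, fun p => ?_, ?_⟩
  · simp [dmap01, hf.1]
  · have h1 := hf.2.1 p
    have h2 := @Greedy.mem_of_add_mem k f R hR p
    simp only [dmap01, hmem]
    split_ifs <;> simp_all
  · exact (Set.finite_Iio (topBound f + 1)).subset fun p hp =>
      dmap01_support_le hk hf hmem hR hp

lemma wt_eq_sum {f : ℕ → ℕ} {N : ℕ} (hN : ∀ p, f p ≠ 0 → p < N) :
    wt f = ∑ p ∈ Finset.range N, p * f p := by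
  have hb : ∀ p, f p ≠ 0 → p < topBound f + 1 := fun p hp =>
    Nat.lt_succ_of_le (le_csSup ⟨N, fun q hq => (hN q hq).le⟩ hp)
  have key : ∀ M, (∀ p, f p ≠ 0 → p < M) →
      ∑ p ∈ Finset.range M, p * f p = ∑ᶠ p, p * f p := by
    intro M hM
    refine (finsum_eq_sum_of_support_subset _ fun p hp => ?_).symm
    simpa using hM p (right_ne_zero_of_mul hp)
  rw [wt, key _ hb, key _ hN]

/-- The weight balance of `∂`. Truncated subtraction makes `a - k` vanish for the indices `a ≤ k`,
which `∂` deletes without moving. -/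
lemma wt_dmap01 {k : ℕ} (hk : 1 ≤ k) {f : ℕ → ℕ} (hf : f ∈ Freq01) {R : Finset ℕ}
    (hmem : ∀ a, a ∈ IR k f ↔ a ∈ R) (hR : Greedy k f R) :
    wt (dmap01 k f) + ∑ a ∈ R, a = wt f + ∑ a ∈ R, (a - k) := by
  have hb : ∀ a ∈ R, a < topBound f + 1 := fun a ha =>
    Nat.lt_succ_of_le (le_topBound hf (hR.supp a ha).2)
  rw [wt_eq_sum fun p hp => dmap01_support_le hk hf hmem hR hp,
    wt_eq_sum (N := topBound f + 1) fun p hp => Nat.lt_succ_of_le (le_topBound hf hp)]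
  generalize topBound f + 1 = N at hb
  have e1 : ∑ a ∈ R, a = ∑ p ∈ Finset.range N, p * (if p ∈ R then 1 else 0) := by
    simp only [mul_ite, mul_one, mul_zero]
    rw [Finset.sum_ite_mem, Finset.inter_eq_right.2 fun a ha => Finset.mem_range.2 (hb a ha)]
  have e2 : ∑ a ∈ R, (a - k) = ∑ p ∈ Finset.range N, p * (if p + k ∈ R then 1 else 0) := by
    have h : ∀ a ∈ R, a - k = ∑ p ∈ Finset.range N, if p + k = a then p else 0 := by
      intro a ha
      rw [Finset.sum_eq_single (a - k)]
      · split_ifs <;> omega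
      · intro p _ hp
        rw [if_neg (by omega)]
      · intro h
        have := hb a ha
        simp at h
        omega
    rw [Finset.sum_congr rfl h, Finset.sum_comm]
    refine Finset.sum_congr rfl fun p _ => ?_
    simp
  rw [e1, e2, ← Finset.sum_add_distrib, ← Finset.sum_add_distrib]
  refine Finset.sum_congr rfl fun p _ => ?_
  have h1 := hR.supp p
  rcases Nat.eq_zero_or_pos p with rfl | hp
  · simp
  rw [← mul_add, ← mul_add]
  congr 1
  have hp' : 1 ≤ p := hp
  simp only [dmap01, hmem, hp', true_and]
  by_cases hpR : p ∈ R
  · have := (h1 hpR).2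
    simp only [hpR, if_true]
    omega
  · simp only [hpR, if_false]
    omega

/-! ### The classes `ℬ_j` in terms of greedy sets -/

lemma mem_Bset_le {k j : ℕ} (hj : j ≤ k) {f : ℕ → ℕ} {R : Finset ℕ}
    (hmem : ∀ a, a ∈ IR k f ↔ a ∈ R) :
    f ∈ Bset k j ↔ f ∈ Freq01 ∧ j ∈ R ∧ ∀ a ∈ R, j ≤ a := by
  rw [Bset, if_neg (by omega)]
  simp only [Set.mem_ofPred_eq, IsLeast, lowerBounds, hmem]

lemma mem_Bset_succ {k : ℕ} {f : ℕ → ℕ} {R : Finset ℕ}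
    (hmem : ∀ a, a ∈ IR k f ↔ a ∈ R) (hR : Greedy k f R) :
    f ∈ Bset k (k + 1) ↔ f ∈ Freq01 ∧ ∀ a ∈ R, k < a := by
  rw [Bset, if_pos rfl]
  simp only [Set.mem_sdiff, Set.mem_iUnion, Set.mem_ofPred_eq, IsLeast, lowerBounds, hmem,
    Finset.mem_Icc, not_exists]
  refine and_congr_right fun hf => ⟨fun h a ha => ?_, fun h j hj hj' => ?_⟩
  · have hne : R.Nonempty := ⟨a, ha⟩
    by_contra hak
    refine h (R.min' hne) ⟨(hR.supp _ (R.min'_mem hne)).1, ?_⟩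
      ⟨hf, R.min'_mem hne, fun b hb => R.min'_le b hb⟩
    have := R.min'_le a ha
    omega
  · have := h j hj'.2.1
    omega

/-- For `i ≤ k`, the hypothesis of the first case of part (1) says that no selected index of `f`
lies below `i`. -/
lemma Bset_ge_iff {k i : ℕ} (hi : i ≤ k) {f : ℕ → ℕ} (hf : f ∈ Freq01) {R : Finset ℕ}
    (hmem : ∀ a, a ∈ IR k f ↔ a ∈ R) (hR : Greedy k f R) :
    ((∃ j, i < j ∧ j ≤ k + 1 ∧ f ∈ Bset k j) ∨ (f ∈ Bset k i ∧ i ≠ k + 1)) ↔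
      ∀ b ∈ R, i ≤ b := by
  constructor
  · rintro (⟨j, h1, h2, h3⟩ | ⟨h3, -⟩) b hb
    · rcases Nat.lt_or_ge k j with h | h
      · obtain rfl : j = k + 1 := by omega
        have := ((mem_Bset_succ hmem hR).1 h3).2 b hb
        omega
      · have := ((mem_Bset_le h hmem).1 h3).2.2 b hb
        omega
    · exact ((mem_Bset_le hi hmem).1 h3).2.2 b hb
  · intro h
    by_cases hall : ∀ b ∈ R, k < b
    · exact Or.inl ⟨k + 1, by omega, le_rfl, (mem_Bset_succ hmem hR).2 ⟨hf, hall⟩⟩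
    · push Not at hall
      obtain ⟨b, hb, hbk⟩ := hall
      have hne : R.Nonempty := ⟨b, hb⟩
      have hle := R.min'_le b hb
      have hB : f ∈ Bset k (R.min' hne) :=
        (mem_Bset_le (by omega) hmem).2 ⟨hf, R.min'_mem hne, fun a ha => R.min'_le a ha⟩
      have hge := h _ (R.min'_mem hne)
      rcases hge.eq_or_lt with heq | hlt
      · right
        rw [← heq] at hB
        exact ⟨hB, by omega⟩
      · exact Or.inl ⟨_, hlt, by omega, hB⟩

/-! ### Comparing the greedy sets of `f` and `∂f` -/

/-- Every `a ∈ R` with `a > k` puts an element of the greedy set `R'` of `∂f` into the window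
`[a - k, a)`; distinct `a` give distinct elements because these windows are disjoint. -/
lemma exists_window_injection {k : ℕ} {f : ℕ → ℕ} (hf : f ∈ Freq01) {R R' : Finset ℕ}
    (hmem : ∀ a, a ∈ IR k f ↔ a ∈ R) (hR : Greedy k f R) (hR' : Greedy k (dmap01 k f) R') :
    ∃ g : ℕ → ℕ, (∀ a ∈ R, k < a → g a ∈ R' ∧ a ≤ g a + k ∧ g a < a) ∧
      Set.InjOn g {a | a ∈ R ∧ k < a} := by
  have h : ∀ a, a ∈ R ∧ k < a → ∃ c, c ∈ R' ∧ a ≤ c + k ∧ c < a := by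
    rintro a ⟨ha, hka⟩
    obtain ⟨c, hc, h1, h2⟩ := hR'.cover (a - k) ((dmap01_ne_zero hf hmem _).2
      (Or.inr ⟨by omega, by rwa [Nat.sub_add_cancel hka.le]⟩))
    exact ⟨c, hc, by omega, by omega⟩
  choose! g hg using h
  refine ⟨g, fun a ha hka => hg a ⟨ha, hka⟩, fun x hx y hy hxy => ?_⟩
  have hx' := hg x hx
  have hy' := hg y hy
  rw [hxy] at hx'
  rcases lt_trichotomy x y with h | h | h
  · have := hR.sep x hx.1 y hy.1 h; omega
  · exact h
  · have := hR.sep y hy.1 x hx.1 h; omega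

lemma card_eq_of_lt {k : ℕ} (hk : 1 ≤ k) {f : ℕ → ℕ} (hf : f ∈ Freq01) {R R' : Finset ℕ}
    (hmem : ∀ a, a ∈ IR k f ↔ a ∈ R) (hR : Greedy k f R) (hR' : Greedy k (dmap01 k f) R')
    (hlt : ∀ a ∈ R, k < a) : R'.card = R.card := by
  refine le_antisymm (card_le_of_windows (d := 1) hR'.sep fun s hs =>
    dmap01_window hk hf hmem hR (hR'.supp s hs).2).1 ?_
  obtain ⟨g, hg, hinj⟩ := exists_window_injection hf hmem hR hR'
  exact Finset.card_le_card_of_injOn g (fun a ha => (hg a ha (hlt a ha)).1)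
    fun x hx y hy => hinj ⟨hx, hlt x hx⟩ ⟨hy, hlt y hy⟩

/-- When `min R = i ≤ k`, passing to `∂f` loses one selected index unless some index below `i` is
selected. -/
lemma card_of_min_le {k i : ℕ} (hk : 1 ≤ k) {f : ℕ → ℕ} (hf : f ∈ Freq01)
    {R R' : Finset ℕ} (hmem : ∀ a, a ∈ IR k f ↔ a ∈ R) (hR : Greedy k f R)
    (hR' : Greedy k (dmap01 k f) R') (hiR : i ∈ R) (hmin : ∀ a ∈ R, i ≤ a) :
    ((∀ b ∈ R', i ≤ b) → R'.card + 1 = R.card) ∧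
      (¬(∀ b ∈ R', i ≤ b) → R'.card = R.card) := by
  have hup := card_le_of_windows (d := 1) hR'.sep fun s hs =>
    dmap01_window hk hf hmem hR (hR'.supp s hs).2
  obtain ⟨g, hg, hinj⟩ := exists_window_injection hf hmem hR hR'
  have hsub : ∀ a ∈ R.erase i, a ∈ R ∧ i + k ≤ a ∧ k < a := by
    intro a ha
    obtain ⟨h1, h2⟩ := Finset.mem_erase.1 ha
    have h3 := hmin a h2
    have h4 := hR.sep i hiR a h2 (by omega)
    have h5 := (hR.supp i hiR).1
    exact ⟨h2, h4, by omega⟩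
  have hinj' : Set.InjOn g (R.erase i : Finset ℕ) := fun x hx y hy =>
    hinj ⟨(hsub x hx).1, (hsub x hx).2.2⟩ ⟨(hsub y hy).1, (hsub y hy).2.2⟩
  have hcard := Finset.card_erase_add_one hiR
  constructor
  · intro hall
    have hlow : (R.erase i).card ≤ R'.card :=
      Finset.card_le_card_of_injOn g
        (fun a ha => (hg a (hsub a ha).1 (hsub a ha).2.2).1) hinj'
    have hne : R'.card ≠ R.card := by
      intro h
      obtain ⟨s, hs, h1, -⟩ := hup.2 h i hiR
      have := hall s hs
      omega
    omega
  · intro hex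
    push Not at hex
    obtain ⟨b, hb, hbi⟩ := hex
    have hlow : (R.erase i).card ≤ (R'.erase b).card := by
      refine Finset.card_le_card_of_injOn g (fun a ha => ?_) hinj'
      obtain ⟨h1, h2, h3⟩ := hsub a ha
      obtain ⟨h4, h5, -⟩ := hg a h1 h3
      exact Finset.mem_erase.2 ⟨by omega, h4⟩
    have := Finset.card_erase_add_one hb
    omega

lemma sum_sub_add_mul {k : ℕ} {T : Finset ℕ} (hT : ∀ a ∈ T, k < a) :
    ∑ a ∈ T, (a - k) + k * T.card = ∑ a ∈ T, a := by
  rw [mul_comm, ← smul_eq_mul, ← Finset.sum_const, ← Finset.sum_add_distrib]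
  exact Finset.sum_congr rfl fun a ha => Nat.sub_add_cancel (hT a ha).le

theorem statement11 (k : ℕ) (hk : 1 ≤ k) (i : ℕ) (hi1 : 1 ≤ i) (hik : i ≤ k + 1)
    (f : ℕ → ℕ) (hf : f ∈ Bset k i) :
    ((((∃ j, i < j ∧ j ≤ k + 1 ∧ dmap01 k f ∈ Bset k j) ∨
        (dmap01 k f ∈ Bset k i ∧ i ≠ k + 1)) →
        (kmeasureF k (dmap01 k f) : ℤ) = (kmeasureF k f : ℤ) - 1) ∧
     (¬((∃ j, i < j ∧ j ≤ k + 1 ∧ dmap01 k f ∈ Bset k j) ∨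
        (dmap01 k f ∈ Bset k i ∧ i ≠ k + 1)) →
        kmeasureF k (dmap01 k f) = kmeasureF k f)) ∧
    ((i = k + 1 →
        (wt (dmap01 k f) : ℤ) = (wt f : ℤ) - (k : ℤ) * (kmeasureF k f : ℤ)) ∧
     (i ≤ k →
        (wt (dmap01 k f) : ℤ) =
          (wt f : ℤ) - (k : ℤ) * (kmeasureF k f : ℤ) + ((k : ℤ) - (i : ℤ)))) := by
  have hfF : f ∈ Freq01 := by
    unfold Bset at hf
    split_ifs at hf <;> exact hf.1
  obtain ⟨R, hmem, hR⟩ := exists_greedy k hk f hfF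
  have hf'F := dmap01_mem hk hfF hmem hR
  obtain ⟨R', hmem', hR'⟩ := exists_greedy k hk _ hf'F
  have hwt := wt_dmap01 hk hfF hmem hR
  rw [kmeasureF_eq_card hR, kmeasureF_eq_card hR']
  rcases Nat.lt_or_ge k i with h | h
  · obtain rfl : i = k + 1 := by omega
    have hlt := ((mem_Bset_succ hmem hR).1 hf).2
    have hsum := sum_sub_add_mul hlt
    refine ⟨⟨?_, fun _ => card_eq_of_lt hk hfF hmem hR hR' hlt⟩, fun _ => ?_, fun h' => ?_⟩
    · rintro (⟨j, h1, h2, -⟩ | ⟨-, h1⟩)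
      · omega
      · exact absurd rfl h1
    · zify at hsum hwt
      linarith
    · omega
  · obtain ⟨-, hiR, hmin⟩ := (mem_Bset_le h hmem).1 hf
    obtain ⟨hc1, hc2⟩ := card_of_min_le hk hfF hmem hR hR' hiR hmin
    rw [Bset_ge_iff h hf'F hmem' hR']
    refine ⟨⟨fun hall => ?_, hc2⟩, fun h' => ?_, fun _ => ?_⟩
    · have := hc1 hall
      omega
    · omega
    · have hi0 : i - k = 0 := by omega
      have hsum := sum_sub_add_mul (k := k) (T := R.erase i) fun a ha => by
        obtain ⟨h1, h2⟩ := Finset.mem_erase.1 ha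
        have h3 := hmin a h2
        have h4 := hR.sep i hiR a h2 (by omega)
        omega
      have hcard := Finset.card_erase_add_one hiR
      rw [← Finset.add_sum_erase R (fun a => a) hiR,
        ← Finset.add_sum_erase R (fun a => a - k) hiR, hi0, ← hsum] at hwt
      rw [← hcard]
      push_cast
      zify at hwt
      linarith
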